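/- Let n ≥ 1, s, s̃ ∈ ℝ, 0 < p < ∞ and 0 < q, r ≤ ∞ satisfy s < s̃ and s/n + 1/q = s̃/n + 1/p. Then there exists a constant C such that for every measurable function f on ℝⁿ, ‖f‖_{K̇^s_{q,r}} ≤ C·‖f‖_{L^{p,r}_{s̃}}; that is, the power-weighted Lorentz space L^{p,r}_{s̃}(ℝⁿ) embeds continuously into the Herz space K̇^s_{q,r}(ℝⁿ). -/

import Mathlib

open MeasureTheory Set ENNReal Filter

noncomputable section

abbrev Euc (n : ℕ) : Type := EuclideanSpace ℝ (Fin n)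

def annulus (n : ℕ) (j : ℤ) : Set (Euc n) :=
  {x : Euc n | (2 : ℝ) ^ (j - 1) ≤ ‖x‖ ∧ ‖x‖ < (2 : ℝ) ^ j}

def herzNorm (n : ℕ) (s : ℝ) (q r : ℝ≥0∞) (f : Euc n → ℝ) : ℝ≥0∞ :=
  if r = ⊤ then
    ⨆ j : ℤ, ENNReal.ofReal ((2 : ℝ) ^ ((j : ℝ) * s)) *
      eLpNorm ((annulus n j).indicator f) q volume
  else
    (∑' j : ℤ, (ENNReal.ofReal ((2 : ℝ) ^ ((j : ℝ) * s)) *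
      eLpNorm ((annulus n j).indicator f) q volume) ^ r.toReal) ^ (1 / r.toReal)

/-- The decreasing rearrangement `f*(t) = inf {λ > 0 : |{x : |f x| > λ}| ≤ t}`. -/
def decRearrangement (n : ℕ) (f : Euc n → ℝ) (t : ℝ) : ℝ≥0∞ :=
  sInf {l : ℝ≥0∞ | 0 < l ∧ volume {x : Euc n | l < (‖f x‖₊ : ℝ≥0∞)} ≤ ENNReal.ofReal t}

/-- The Lorentz quasi-norm `‖f‖_{L^{p,r}}`. -/
def lorentzNorm (n : ℕ) (p : ℝ) (r : ℝ≥0∞) (f : Euc n → ℝ) : ℝ≥0∞ :=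
  if r = ⊤ then
    ⨆ (t : ℝ) (_ : 0 < t), ENNReal.ofReal (t ^ (1 / p)) * decRearrangement n f t
  else
    (∫⁻ t in Set.Ioi (0 : ℝ),
      (ENNReal.ofReal (t ^ (1 / p)) * decRearrangement n f t) ^ r.toReal *
        ENNReal.ofReal t⁻¹) ^ (1 / r.toReal)

/-- The power-weighted Lorentz quasi-norm `‖f‖_{L^{p,r}_{s}} = ‖|·|^s f‖_{L^{p,r}}`. -/
def lorentzNormW (n : ℕ) (s : ℝ) (p : ℝ) (r : ℝ≥0∞) (f : Euc n → ℝ) : ℝ≥0∞ :=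
  lorentzNorm n p r (fun x => ‖x‖ ^ s * f x)

lemma vol_gt_dec (n : ℕ) (g : Euc n → ℝ) (t : ℝ) :
    volume {x : Euc n | decRearrangement n g t < (‖g x‖₊ : ℝ≥0∞)} ≤ ENNReal.ofReal t := by
  set a := decRearrangement n g t with ha
  by_cases htop : a = ⊤
  · simp [htop]
  obtain ⟨u, hu, hu1, hu2⟩ := exists_seq_strictAnti_tendsto' (lt_top_iff_ne_top.mpr htop)
  have hU : {x : Euc n | a < (‖g x‖₊ : ℝ≥0∞)} = ⋃ k, {x : Euc n | u k < (‖g x‖₊ : ℝ≥0∞)} := by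
    ext x
    simp only [mem_ofPred_eq, mem_iUnion]
    constructor
    · intro hx
      exact (hu2.eventually (gt_mem_nhds hx)).exists
    · rintro ⟨k, hk⟩
      exact (hu1 k).1.trans hk
  have hm : Monotone (fun k => {x : Euc n | u k < (‖g x‖₊ : ℝ≥0∞)}) := by
    intro i j hij x hx
    exact lt_of_le_of_lt (hu.antitone hij) hx
  rw [hU, hm.measure_iUnion]
  refine iSup_le fun k => ?_
  obtain ⟨l, hl, hlu⟩ := sInf_lt_iff.mp (show sInf _ < u k from (hu1 k).1)
  refine le_trans (measure_mono ?_) hl.2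
  intro x hx
  exact lt_trans hlu hx

lemma dec_antitone (n : ℕ) (g : Euc n → ℝ) : Antitone (decRearrangement n g) := by
  intro a b hab
  refine sInf_le_sInf ?_
  intro l hl
  exact ⟨hl.1, hl.2.trans (ENNReal.ofReal_le_ofReal hab)⟩

lemma level_bound (n : ℕ) (g : Euc n → ℝ) (hg : Measurable g) (A : Set (Euc n))
    (hA : MeasurableSet A) (τ : ℕ → ℝ) (h0 : volume A ≤ ENNReal.ofReal (τ 0))
    (hτ : Tendsto τ atTop (nhds 0)) (Q : ℝ) (hQ : 0 < Q) :
    ∫⁻ x in A, ‖g x‖ₑ ^ Q ≤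
      ∑' m : ℕ, decRearrangement n g (τ (m + 1)) ^ Q * ENNReal.ofReal (τ m) := by
  set L : ℕ → ℝ≥0∞ := fun m => decRearrangement n g (τ m) with hL
  let E : ℕ → Set (Euc n) := fun m => if m = 0 then A else {x | L m < ‖g x‖ₑ}
  have hE : ∀ m, MeasurableSet (E m) := by
    intro m
    by_cases hm : m = 0
    · simp [E, hm, hA]
    · simp only [E, hm, if_false]
      exact measurableSet_lt measurable_const hg.enorm
  have hEv : ∀ m, volume (E m) ≤ ENNReal.ofReal (τ m) := by
    intro m
    by_cases hm : m = 0
    · simp [E, hm, h0]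
    · simp only [E, hm, if_false]
      exact vol_gt_dec n g (τ m)
  have hnull : volume {x | ∀ m, L (m + 1) < ‖g x‖ₑ} = 0 := by
    have h1 : ∀ m, volume {x | ∀ m, L (m + 1) < ‖g x‖ₑ} ≤ ENNReal.ofReal (τ (m + 1)) := fun m =>
      (measure_mono (show {x | ∀ m, L (m + 1) < ‖g x‖ₑ} ⊆ {x | L (m + 1) < ‖g x‖ₑ} from
        fun x hx => hx m)).trans (vol_gt_dec n g (τ (m + 1)))
    have h2 : Tendsto (fun m => ENNReal.ofReal (τ (m + 1))) atTop (nhds 0) := by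
      simpa using ENNReal.tendsto_ofReal (hτ.comp (tendsto_add_atTop_nat 1))
    exact le_antisymm (ge_of_tendsto' h2 h1) bot_le
  have hae : ∀ᵐ x ∂(volume : Measure (Euc n)), x ∈ A → ‖g x‖ₑ ^ Q ≤
      ∑' m : ℕ, (E m).indicator (fun _ => L (m + 1) ^ Q) x := by
    have : ∀ᵐ x ∂(volume : Measure (Euc n)), ¬ ∀ m, L (m + 1) < ‖g x‖ₑ := by
      rw [ae_iff]; simpa using hnull
    filter_upwards [this] with x hx hxA
    have hex : ∃ m, ‖g x‖ₑ ≤ L (m + 1) := by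
      by_contra hcon
      push Not at hcon
      exact hx hcon
    classical
    have hm := Nat.find_spec hex
    set m := Nat.find hex with hmdef
    have hmem : x ∈ E m := by
      by_cases h : m = 0
      · simp [E, h, hxA]
      · simp only [E, h, if_false, mem_ofPred_eq]
        have := Nat.find_min hex (m := m - 1) (by omega)
        rw [not_le, Nat.sub_add_cancel (by omega)] at this
        exact this
    refine le_trans ?_ (ENNReal.le_tsum m)
    rw [indicator_of_mem hmem]
    exact ENNReal.rpow_le_rpow hm hQ.le
  calc ∫⁻ x in A, ‖g x‖ₑ ^ Q
      ≤ ∫⁻ x in A, ∑' m : ℕ, (E m).indicator (fun _ => L (m + 1) ^ Q) x := 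
        lintegral_mono_ae ((ae_restrict_iff' hA).mpr hae)
    _ ≤ ∫⁻ x, ∑' m : ℕ, (E m).indicator (fun _ => L (m + 1) ^ Q) x := 
        setLIntegral_le_lintegral _ _
    _ = ∑' m : ℕ, ∫⁻ x, (E m).indicator (fun _ => L (m + 1) ^ Q) x := 
        lintegral_tsum fun m => (measurable_const.indicator (hE m)).aemeasurable
    _ ≤ _ := by
        refine ENNReal.tsum_le_tsum fun m => ?_
        rw [lintegral_indicator_const (hE m)]
        exact mul_le_mul_right (hEv m) _

lemma geom_ne_top (δ : ℝ) (hδ : 0 < δ) : ∑' m : ℕ, (2 : ℝ≥0∞) ^ (-(m * δ)) ≠ ⊤ := by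
  have : ∀ m : ℕ, (2 : ℝ≥0∞) ^ (-(m * δ)) = ((2 : ℝ≥0∞) ^ (-δ)) ^ m := by
    intro m
    rw [← ENNReal.rpow_natCast, ← ENNReal.rpow_mul]
    congr 1; ring
  simp_rw [this]
  rw [ENNReal.tsum_geometric]
  have h : (2 : ℝ≥0∞) ^ (-δ) < 1 := ENNReal.rpow_lt_one_of_one_lt_of_neg (by norm_num) (by linarith)
  rw [ENNReal.inv_ne_top]
  exact (tsub_pos_of_lt h).ne'

lemma discrete_bound (Q R δ : ℝ) (hQ : 0 < Q) (hR : 0 < R) (hδ : 0 < δ) (C₁ : ℝ≥0∞) (hC₁ : C₁ ≠ ⊤) :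
    ∃ C : ℝ≥0∞, C ≠ ⊤ ∧ ∀ T b : ℤ → ℝ≥0∞,
      (∀ j, T j ^ Q ≤ C₁ * ∑' m : ℕ, (2 : ℝ≥0∞) ^ (-(m * δ)) * b (j - m - 1) ^ Q) →
      ∑' j, T j ^ R ≤ C * ∑' k, b k ^ R := by
  set G := ∑' m : ℕ, (2 : ℝ≥0∞) ^ (-(m * (δ / 2))) with hG
  have hGt : G ≠ ⊤ := geom_ne_top _ (by linarith)
  set H := ∑' m : ℕ, (2 : ℝ≥0∞) ^ (-(m * (δ / 2 * (R / Q)))) with hH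
  have hHt : H ≠ ⊤ := geom_ne_top _ (by positivity)
  have hRQ : 0 < R / Q := by positivity
  refine ⟨(C₁ * G) ^ (R / Q) * H, by finiteness, ?_⟩
  intro T b hT
  have key : ∀ j, T j ^ R ≤ (C₁ * G) ^ (R / Q) *
      ∑' m : ℕ, (2 : ℝ≥0∞) ^ (-(m * (δ / 2 * (R / Q)))) * b (j - m - 1) ^ R := by
    intro j
    set S := ∑' m : ℕ, (2 : ℝ≥0∞) ^ (-(m * (δ / 2 * (R / Q)))) * b (j - m - 1) ^ R with hS
    have h1 : ∀ m : ℕ, (2 : ℝ≥0∞) ^ (-(m * (δ / 2))) * b (j - m - 1) ^ Q ≤ S ^ (Q / R) := by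
      intro m
      have : (2 : ℝ≥0∞) ^ (-(m * (δ / 2))) * b (j - m - 1) ^ Q =
          ((2 : ℝ≥0∞) ^ (-(m * (δ / 2 * (R / Q)))) * b (j - m - 1) ^ R) ^ (Q / R) := by
        rw [ENNReal.mul_rpow_of_nonneg _ _ (by positivity), ← ENNReal.rpow_mul, ← ENNReal.rpow_mul]
        congr 2 <;> field_simp
      rw [this]
      exact ENNReal.rpow_le_rpow (ENNReal.le_tsum m) (by positivity)
    have h2 : T j ^ Q ≤ C₁ * G * S ^ (Q / R) := by
      refine (hT j).trans ?_
      rw [mul_assoc, hG, ← ENNReal.tsum_mul_right]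
      refine mul_le_mul_right (ENNReal.tsum_le_tsum fun m => ?_) _
      refine le_trans (le_of_eq ?_) (mul_le_mul_right (h1 m) _)
      rw [← mul_assoc, ← ENNReal.rpow_add _ _ (by norm_num) (by norm_num)]
      congr 2; ring
    calc T j ^ R = (T j ^ Q) ^ (R / Q) := by
          rw [← ENNReal.rpow_mul]; congr 1; field_simp
      _ ≤ (C₁ * G * S ^ (Q / R)) ^ (R / Q) := ENNReal.rpow_le_rpow h2 hRQ.le
      _ = _ := by
          rw [ENNReal.mul_rpow_of_nonneg _ _ hRQ.le, ← ENNReal.rpow_mul]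
          have : Q / R * (R / Q) = 1 := by field_simp
          rw [this, ENNReal.rpow_one]
  calc ∑' j, T j ^ R ≤ ∑' j : ℤ, (C₁ * G) ^ (R / Q) *
      ∑' m : ℕ, (2 : ℝ≥0∞) ^ (-(m * (δ / 2 * (R / Q)))) * b (j - m - 1) ^ R :=
        ENNReal.tsum_le_tsum key
    _ = (C₁ * G) ^ (R / Q) * ∑' m : ℕ, ∑' j : ℤ,
        (2 : ℝ≥0∞) ^ (-(m * (δ / 2 * (R / Q)))) * b (j - m - 1) ^ R := by
        rw [ENNReal.tsum_mul_left, ENNReal.tsum_comm]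
    _ = (C₁ * G) ^ (R / Q) * ∑' m : ℕ, 
        (2 : ℝ≥0∞) ^ (-(m * (δ / 2 * (R / Q)))) * ∑' k, b k ^ R := by
        congr 1
        refine tsum_congr fun m => ?_
        rw [ENNReal.tsum_mul_left]
        congr 1
        have := (Equiv.subRight ((m : ℤ) + 1)).tsum_eq (fun k => b k ^ R)
        rw [← this]
        refine tsum_congr fun k => ?_
        simp only [Equiv.subRight_apply]
        congr 2; ring
    _ = _ := by rw [ENNReal.tsum_mul_right, mul_assoc]

lemma two_ofReal (x : ℝ) : ENNReal.ofReal ((2 : ℝ) ^ x) = (2 : ℝ≥0∞) ^ x := by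
  rw [← ENNReal.ofReal_rpow_of_pos (by norm_num)]
  simp

lemma sum_le_lorentz (n : ℕ) (hn : 1 ≤ n) (p V R : ℝ) (hp : 0 < p) (hV : 0 < V) (hR : 0 < R) :
    ∃ c : ℝ≥0∞, c ≠ ⊤ ∧ ∀ g : Euc n → ℝ,
      ∑' k : ℤ, ((2 : ℝ≥0∞) ^ ((k : ℝ) * n / p) *
        decRearrangement n g (V * 2 ^ ((k : ℝ) * n))) ^ R ≤
      c * ∫⁻ t in Set.Ioi (0 : ℝ),
        (ENNReal.ofReal (t ^ (1 / p)) * decRearrangement n g t) ^ R * ENNReal.ofReal t⁻¹ := by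
  set D : ℝ≥0∞ := ENNReal.ofReal ((V * 2 ^ (-(n : ℝ))) ^ (1 / p)) with hD
  have hDpos : 0 < (V * 2 ^ (-(n : ℝ))) ^ (1 / p) := by positivity
  have hD0 : D ≠ 0 := by simpa [hD] using hDpos
  have hDt : D ≠ ⊤ := ENNReal.ofReal_ne_top
  set K : ℝ≥0∞ := D ^ R * ENNReal.ofReal (1 / 2) with hK
  have hK0 : K ≠ 0 := by
    refine mul_ne_zero ?_ (by simp)
    simp [ENNReal.rpow_eq_zero_iff, hD0, hDt]
  have hKt : K ≠ ⊤ := by finiteness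
  refine ⟨K⁻¹, by simpa using hK0, ?_⟩
  intro g
  set t : ℤ → ℝ := fun k => V * 2 ^ ((k : ℝ) * n) with ht
  have htpos : ∀ k, 0 < t k := fun k => by positivity
  have htmono : Monotone t := by
    intro a b hab
    simp only [ht]
    gcongr
    · norm_num
  have hstep : ∀ k, t (k - 1) ≤ t k / 2 := by
    intro k
    have : (2 : ℝ) ^ (((k - 1 : ℤ) : ℝ) * n) ≤ 2 ^ ((k : ℝ) * n) / 2 := by
      have h2 : (2 : ℝ) ^ ((k : ℝ) * n) / 2 = 2 ^ ((k : ℝ) * n - 1) := by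
        rw [Real.rpow_sub_one (by norm_num)]
      rw [h2]
      apply Real.rpow_le_rpow_of_exponent_le (by norm_num)
      push_cast
      have : (1 : ℝ) ≤ n := by exact_mod_cast hn
      nlinarith
    simp only [ht]
    nlinarith
  set F : ℝ → ℝ≥0∞ := fun t =>
    (ENNReal.ofReal (t ^ (1 / p)) * decRearrangement n g t) ^ R * ENNReal.ofReal t⁻¹ with hF
  have key : ∀ k : ℤ, K * ((2 : ℝ≥0∞) ^ ((k : ℝ) * n / p) * decRearrangement n g (t k)) ^ R ≤
      ∫⁻ x in Ioc (t (k - 1)) (t k), F x := by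
    intro k
    have h1 : ∀ x ∈ Ioc (t (k - 1)) (t k),
        (ENNReal.ofReal ((t (k - 1)) ^ (1 / p)) * decRearrangement n g (t k)) ^ R *
          ENNReal.ofReal (t k)⁻¹ ≤ F x := by
      intro x hx
      have hx0 : 0 < x := (htpos _).trans hx.1
      simp only [hF]
      gcongr
      · exact hx.1.le
      · exact dec_antitone n g hx.2
      · exact hx.2
    refine le_trans ?_ (setLIntegral_mono' measurableSet_Ioc h1)
    rw [setLIntegral_const, Real.volume_Ioc, mul_assoc _ (ENNReal.ofReal (t k)⁻¹) _, ← ENNReal.ofReal_mul (by have := htpos k; positivity)]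
    have h3 : ENNReal.ofReal (1 / 2) ≤ ENNReal.ofReal ((t k)⁻¹ * (t k - t (k - 1))) := by
      apply ENNReal.ofReal_le_ofReal
      rw [inv_mul_eq_div, le_div_iff₀ (htpos k)]
      linarith [hstep k]
    have h4 : ENNReal.ofReal ((t (k - 1)) ^ (1 / p)) = D * (2 : ℝ≥0∞) ^ ((k : ℝ) * n / p) := by
      rw [hD, ← two_ofReal, ← ENNReal.ofReal_mul hDpos.le]
      congr 1
      rw [div_eq_mul_one_div ((k : ℝ) * n) p, Real.rpow_mul (by norm_num), ← Real.mul_rpow (by positivity) (by positivity)]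
      congr 1
      simp only [ht]
      rw [mul_assoc, ← Real.rpow_add (by norm_num)]
      congr 2
      push_cast; ring
    rw [h4, mul_assoc D, ENNReal.mul_rpow_of_nonneg D _ hR.le, hK, mul_right_comm]
    gcongr
  have hdisj : Pairwise (Function.onFun Disjoint fun k : ℤ => Ioc (t (k - 1)) (t k)) := by
    have := htmono.pairwise_disjoint_on_Ioc_pred
    exact this
  rw [mul_comm, ← div_eq_mul_inv, ENNReal.le_div_iff_mul_le (Or.inl hK0) (Or.inl hKt), mul_comm,
    ← ENNReal.tsum_mul_left]
  calc _ ≤ ∑' k : ℤ, ∫⁻ x in Ioc (t (k - 1)) (t k), F x := ENNReal.tsum_le_tsum key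
    _ = ∫⁻ x in ⋃ k : ℤ, Ioc (t (k - 1)) (t k), F x :=
        (lintegral_iUnion (fun _ => measurableSet_Ioc) hdisj _).symm
    _ ≤ _ := by
        apply lintegral_mono_set
        refine iUnion_subset fun k x hx => (htpos _).trans hx.1

lemma annulus_meas (n : ℕ) (j : ℤ) : MeasurableSet (annulus n j) :=
  (measurableSet_le measurable_const measurable_norm).inter
    (measurableSet_lt measurable_norm measurable_const)

lemma exists_V (n : ℕ) : ∃ V : ℝ, 0 < V ∧ ∀ j : ℤ,
    volume (annulus n j) ≤ ENNReal.ofReal (V * 2 ^ ((j : ℝ) * n)) := by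
  refine ⟨(volume (Metric.ball (0 : Euc n) 1)).toReal, ?_, ?_⟩
  · exact ENNReal.toReal_pos (Metric.measure_ball_pos _ _ one_pos).ne' measure_ball_lt_top.ne
  · intro j
    have hsub : annulus n j ⊆ Metric.ball (0 : Euc n) (2 ^ j) := by
      intro x hx
      simpa using hx.2
    refine (measure_mono hsub).trans ?_
    rw [Measure.addHaar_ball_of_pos _ _ (by positivity), ENNReal.ofReal_mul (by positivity),
      ENNReal.ofReal_toReal measure_ball_lt_top.ne, mul_comm]
    apply le_of_eq
    congr 2
    rw [Real.rpow_mul (by norm_num), Real.rpow_intCast, Real.rpow_natCast]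
    simp

lemma term_bound (n : ℕ) (hn : 1 ≤ n) (s st p V : ℝ) (q : ℝ≥0∞) (hV : 0 < V)
    (hq0 : q ≠ 0) (hqt : q ≠ ⊤)
    (hVv : ∀ j : ℤ, volume (annulus n j) ≤ ENNReal.ofReal (V * 2 ^ ((j : ℝ) * n)))
    (he : s * q.toReal + n = st * q.toReal + n * q.toReal / p)
    (f : Euc n → ℝ) (hf : Measurable f) (j : ℤ) :
    (ENNReal.ofReal ((2 : ℝ) ^ ((j : ℝ) * s)) *
      eLpNorm ((annulus n j).indicator f) q volume) ^ q.toReal ≤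
    (ENNReal.ofReal V * (2 : ℝ≥0∞) ^ (|st| * q.toReal + n * q.toReal / p)) *
      ∑' m : ℕ, (2 : ℝ≥0∞) ^ (-(m * ((st - s) * q.toReal))) *
        ((2 : ℝ≥0∞) ^ (((j - m - 1 : ℤ) : ℝ) * n / p) *
          decRearrangement n (fun x => ‖x‖ ^ st * f x)
            (V * 2 ^ (((j - m - 1 : ℤ) : ℝ) * n))) ^ q.toReal := by
  have hQ : 0 < q.toReal := ENNReal.toReal_pos hq0 hqt
  set Q := q.toReal with hQdef
  set g : Euc n → ℝ := fun x => ‖x‖ ^ st * f x with hg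
  have hgm : Measurable g := by
    exact (measurable_norm.pow_const st).mul hf
  have hn1 : (1 : ℝ) ≤ n := by exact_mod_cast hn
  set τ : ℕ → ℝ := fun m => V * 2 ^ (((j : ℝ) - m) * n) with hτ
  have hτ0 : Tendsto τ atTop (nhds 0) := by
    have h1 : ∀ m : ℕ, τ m = (V * 2 ^ ((j : ℝ) * n)) * ((2 : ℝ) ^ (-(n : ℝ))) ^ m := by
      intro m
      rw [← Real.rpow_natCast, ← Real.rpow_mul (by norm_num), mul_assoc, ← Real.rpow_add (by norm_num)]
      simp only [hτ]
      congr 2; ring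
    have h2 : Tendsto (fun m : ℕ => ((2 : ℝ) ^ (-(n : ℝ))) ^ m) atTop (nhds 0) :=
      tendsto_pow_atTop_nhds_zero_of_lt_one (by positivity)
        (Real.rpow_lt_one_of_one_lt_of_neg (by norm_num) (by linarith))
    have h3 := h2.const_mul (V * 2 ^ ((j : ℝ) * n))
    rw [mul_zero] at h3
    exact h3.congr fun m => (h1 m).symm
  have hlev := level_bound n g hgm (annulus n j) (annulus_meas n j) τ
    (by simpa [hτ] using hVv j) hτ0 Q hQ
  have hpt : ∀ x ∈ annulus n j, ‖f x‖ₑ ^ Q ≤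
      ((2 : ℝ≥0∞) ^ (|st| - j * st)) ^ Q * ‖g x‖ₑ ^ Q := by
    intro x hx
    rw [← ENNReal.mul_rpow_of_nonneg _ _ hQ.le]
    refine ENNReal.rpow_le_rpow ?_ hQ.le
    have hx0 : 0 < ‖x‖ := lt_of_lt_of_le (by positivity) hx.1
    have hlow : (2 : ℝ) ^ (j * st - |st|) ≤ ‖x‖ ^ st := by
      have hx1 : (2 : ℝ) ^ ((j : ℝ) - 1) ≤ ‖x‖ := by
        have := hx.1
        rw [← Real.rpow_intCast] at this
        push_cast at this
        exact this
      have hx2 : ‖x‖ ≤ (2 : ℝ) ^ (j : ℝ) := by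
        rw [Real.rpow_intCast]
        exact hx.2.le
      rcases le_total 0 st with h | h
      · rw [abs_of_nonneg h]
        calc (2 : ℝ) ^ (j * st - st) = ((2 : ℝ) ^ ((j : ℝ) - 1)) ^ st := by
              rw [← Real.rpow_mul (by norm_num)]; congr 1; ring
          _ ≤ _ := Real.rpow_le_rpow (by positivity) hx1 h
      · rw [abs_of_nonpos h]
        calc (2 : ℝ) ^ (j * st - -st) ≤ (2 : ℝ) ^ (j * st) :=
              Real.rpow_le_rpow_of_exponent_le (by norm_num) (by linarith)
          _ = ((2 : ℝ) ^ (j : ℝ)) ^ st := by rw [Real.rpow_mul (by norm_num)]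
          _ ≤ _ := Real.rpow_le_rpow_of_nonpos hx0 hx2 h
    have hreal : ‖f x‖ ≤ (2 : ℝ) ^ (|st| - j * st) * ‖g x‖ := by
      have h1 : ‖g x‖ = ‖x‖ ^ st * ‖f x‖ := by
        simp only [hg, norm_mul]
        rw [Real.norm_of_nonneg (by positivity)]
      have h2 : (2 : ℝ) ^ (|st| - j * st) * 2 ^ (j * st - |st|) = 1 := by
        rw [← Real.rpow_add (by norm_num)]
        simp
      rw [h1, ← mul_assoc]
      calc ‖f x‖ = ((2 : ℝ) ^ (|st| - j * st) * 2 ^ (j * st - |st|)) * ‖f x‖ := by rw [h2, one_mul]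
        _ ≤ _ := by gcongr
    rw [← two_ofReal, ← ofReal_norm, ← ofReal_norm, ← ENNReal.ofReal_mul (by positivity)]
    exact ENNReal.ofReal_le_ofReal hreal
  have hnorm : eLpNorm ((annulus n j).indicator f) q volume ^ Q =
      ∫⁻ x in annulus n j, ‖f x‖ₑ ^ Q := by
    rw [eLpNorm_indicator_eq_eLpNorm_restrict (annulus_meas n j),
      eLpNorm_eq_lintegral_rpow_enorm_toReal hq0 hqt, ← ENNReal.rpow_mul]
    rw [one_div, inv_mul_cancel₀ hQ.ne', ENNReal.rpow_one]
  have hint : ∫⁻ x in annulus n j, ‖f x‖ₑ ^ Q ≤ ((2 : ℝ≥0∞) ^ (|st| - j * st)) ^ Q *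
      ∑' m : ℕ, decRearrangement n g (τ (m + 1)) ^ Q * ENNReal.ofReal (τ m) := by
    refine (setLIntegral_mono' (annulus_meas n j) hpt).trans ?_
    rw [lintegral_const_mul _ (by fun_prop)]
    gcongr
  rw [ENNReal.mul_rpow_of_nonneg _ _ hQ.le, hnorm]
  refine (mul_le_mul_right hint _).trans (le_of_eq ?_)
  rw [← mul_assoc, ← ENNReal.tsum_mul_left, ← ENNReal.tsum_mul_left]
  refine tsum_congr fun m => ?_
  have hτ1 : τ (m + 1) = V * 2 ^ (((j - m - 1 : ℤ) : ℝ) * n) := by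
    simp only [hτ]
    congr 2
    push_cast; ring
  rw [← hτ1]
  set l := decRearrangement n g (τ (m + 1))
  simp only [hτ]
  rw [ENNReal.ofReal_mul hV.le, two_ofReal, two_ofReal, ENNReal.mul_rpow_of_nonneg _ _ hQ.le,
    ← ENNReal.rpow_mul, ← ENNReal.rpow_mul, ← ENNReal.rpow_mul]
  have e1 : ∀ a b c d v : ℝ≥0∞, a * b * (c * (v * d)) = (v * c) * (a * b * d) := by
    intros; ring
  have e2 : ∀ a b c d v : ℝ≥0∞, v * a * (b * (d * c)) = (v * c) * (a * b * d) := by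
    intros; ring
  rw [e1, e2]
  congr 1
  have h2 : (2 : ℝ≥0∞) ≠ 0 := by norm_num
  have h2t : (2 : ℝ≥0∞) ≠ ⊤ := by norm_num
  simp only [← ENNReal.rpow_add _ _ h2 h2t]
  congr 1
  push_cast
  have hnn : (n : ℝ) = st * Q + n * Q / p - s * Q := by linarith
  have e3 : ((j : ℝ) - m - 1) * n / p * Q = ((j : ℝ) - m - 1) * (n * Q / p) := by ring
  rw [e3]
  have : ((j : ℝ) - m) * n = ((j : ℝ) - m) * (st * Q + n * Q / p - s * Q) := by rw [← hnn]
  rw [this]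
  ring

lemma le_final {A B C : ℝ≥0∞} (hC : C ≠ ⊤) (h : A ≤ C * B) :
    A ≤ ENNReal.ofReal (C.toReal + 1) * B := by
  refine h.trans ?_
  gcongr
  rw [ENNReal.ofReal_add ENNReal.toReal_nonneg zero_le_one, ENNReal.ofReal_toReal hC]
  exact le_self_add

/-- If `s < s̃` and `s/n + 1/q = s̃/n + 1/p`, the power-weighted Lorentz space
`L^{p,r}_{s̃}(ℝⁿ)` embeds continuously into the Herz space `K̇^s_{q,r}(ℝⁿ)`. -/
theorem lorentz_embeds_herz
    (n : ℕ) (hn : 1 ≤ n) (s st p : ℝ) (q r : ℝ≥0∞)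
    (hp : 0 < p) (hq : 0 < q) (hr : 0 < r)
    (hss : s < st)
    (he : s / (n : ℝ) + (q⁻¹).toReal = st / (n : ℝ) + 1 / p) :
    ∃ C : ℝ, 0 < C ∧ ∀ f : Euc n → ℝ, Measurable f →
      herzNorm n s q r f ≤ ENNReal.ofReal C * lorentzNormW n st p r f := by
  have hn0 : (0 : ℝ) < n := by exact_mod_cast hn
  have hqt : q ≠ ⊤ := by
    rintro rfl
    have h1 : s / (n : ℝ) < st / n := by gcongr
    have h2 : 0 < 1 / p := by positivity
    simp at he
    rw [one_div] at h2
    linarith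
  have hQ : 0 < q.toReal := ENNReal.toReal_pos hq.ne' hqt
  have he' : s * q.toReal + n = st * q.toReal + n * q.toReal / p := by
    rw [ENNReal.toReal_inv] at he
    field_simp at he ⊢
    linarith
  obtain ⟨V, hV, hVv⟩ := exists_V n
  have hterm := term_bound n hn s st p V q hV hq.ne' hqt hVv he'
  set Q := q.toReal with hQdef
  have hδ : 0 < (st - s) * Q := mul_pos (by linarith) hQ
  set C₁ := ENNReal.ofReal V * (2 : ℝ≥0∞) ^ (|st| * Q + n * Q / p) with hC₁
  have hC₁t : C₁ ≠ ⊤ :=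
    ENNReal.mul_ne_top ENNReal.ofReal_ne_top
      (ENNReal.rpow_ne_top_of_ne_zero (by norm_num) (by norm_num))
  by_cases hrt : r = ⊤
  · set G := ∑' m : ℕ, (2 : ℝ≥0∞) ^ (-(m * ((st - s) * Q))) with hG
    have hGt : G ≠ ⊤ := geom_ne_top _ hδ
    set D : ℝ≥0∞ := ENNReal.ofReal ((V⁻¹) ^ (1 / p)) with hD
    have hCt : (C₁ * G) ^ (1 / Q) * D ≠ ⊤ :=
      ENNReal.mul_ne_top (ENNReal.rpow_ne_top_of_nonneg (by positivity)
        (ENNReal.mul_ne_top hC₁t hGt)) ENNReal.ofReal_ne_top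
    refine ⟨((C₁ * G) ^ (1 / Q) * D).toReal + 1, by positivity, fun f hf => le_final hCt ?_⟩
    rw [lorentzNormW, herzNorm, lorentzNorm, if_pos hrt, if_pos hrt]
    set L := ⨆ (t : ℝ) (_ : 0 < t), ENNReal.ofReal (t ^ (1 / p)) *
      decRearrangement n (fun x => ‖x‖ ^ st * f x) t with hL
    have hb : ∀ k : ℤ, (2 : ℝ≥0∞) ^ ((k : ℝ) * n / p) *
        decRearrangement n (fun x => ‖x‖ ^ st * f x) (V * 2 ^ ((k : ℝ) * n)) ≤ D * L := by
      intro k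
      have h1 : (2 : ℝ≥0∞) ^ ((k : ℝ) * n / p) =
          D * ENNReal.ofReal ((V * 2 ^ ((k : ℝ) * n)) ^ (1 / p)) := by
        rw [hD, ← two_ofReal, ← ENNReal.ofReal_mul (by positivity),
          ← Real.mul_rpow (by positivity) (by positivity), inv_mul_cancel_left₀ hV.ne',
          ← Real.rpow_mul (by norm_num)]
        congr 2; ring
      rw [h1, mul_assoc]
      gcongr
      exact le_iSup₂_of_le (V * 2 ^ ((k : ℝ) * n)) (by positivity) le_rfl
    refine iSup_le fun j => ?_
    have h3 := (hterm f hf j).trans (mul_le_mul_right (ENNReal.tsum_le_tsum fun m : ℕ =>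
      mul_le_mul_right (ENNReal.rpow_le_rpow (hb (j - m - 1)) hQ.le) _) _)
    rw [ENNReal.tsum_mul_right, ← mul_assoc] at h3
    have h4 := ENNReal.rpow_le_rpow h3 (show 0 ≤ 1 / Q by positivity)
    rw [ENNReal.mul_rpow_of_nonneg _ _ (show 0 ≤ 1 / Q by positivity), ← ENNReal.rpow_mul,
      ← ENNReal.rpow_mul, mul_one_div_cancel hQ.ne', ENNReal.rpow_one, ENNReal.rpow_one,
      ← mul_assoc] at h4
    exact h4
  · have hR : 0 < r.toReal := ENNReal.toReal_pos hr.ne' hrt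
    set R := r.toReal with hRdef
    obtain ⟨C₂, hC₂, hdisc⟩ := discrete_bound Q R _ hQ hR hδ C₁ hC₁t
    obtain ⟨C₃, hC₃, hsum⟩ := sum_le_lorentz n hn p V R hp hV hR
    have hCt : (C₂ * C₃) ^ (1 / R) ≠ ⊤ :=
      ENNReal.rpow_ne_top_of_nonneg (by positivity) (ENNReal.mul_ne_top hC₂ hC₃)
    refine ⟨((C₂ * C₃) ^ (1 / R)).toReal + 1, by positivity, fun f hf => le_final hCt ?_⟩
    rw [lorentzNormW, herzNorm, lorentzNorm, if_neg hrt, if_neg hrt,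
      ← ENNReal.mul_rpow_of_nonneg _ _ (by positivity)]
    refine ENNReal.rpow_le_rpow ?_ (by positivity)
    rw [mul_assoc]
    refine (hdisc _ (fun k : ℤ => (2 : ℝ≥0∞) ^ ((k : ℝ) * n / p) *
      decRearrangement n (fun x => ‖x‖ ^ st * f x) (V * 2 ^ ((k : ℝ) * n)))
      (fun j => hterm f hf j)).trans ?_
    exact mul_le_mul_right (hsum _) _
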